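/- arXiv:2406.20029 — 3 statements merged into one kernel-verified Lean document; each statement's English description precedes it below -/
import Mathlib

section
/- If a set of states Q̂ ⊆ Θ is not a union-measurable cell of the commonly identified partition QI = ⋁_ℓ Q_ℓ (i.e. Q̂ ∉ QI, so some agent ℓ has a cell Q_ℓ of its identification partition containing states θ̂ ∈ Q̂ and θ̃ ∉ Q̂), then Q̂ is not commonly learned: it is not the case that for all q ∈ (0,1) and all θ ∈ Q̂, lim_{t→∞} P^θ(C^q_t(Q̂)) = 1, where C^q_t(Q̂) := ∩_{n≥1} [B^q_t]^n(Q̂) is the event that Q̂ is common q-belief at time t. -/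
/-!
The failure already occurs at the first order of belief: common `q`-belief of `F = {θ ∈ Q̂}`
implies that the agent `ℓ` who confuses `θhat ∈ Q̂` with `θtil ∉ Q̂` assigns probability at least
`q` to `F`. Equal marginals mean that every history `g` of `ℓ` has the same conditional probability
`A g` under the two states (`state_inter_hist`). On a history where `ℓ` does `q`-believe `F`,
`p θtil * A g ≤ P (Fᶜ ∩ g) ≤ (1 - q) * P g`; summing over such histories,
the conditional probability under `θhat` that `ℓ` `q`-believes `F` is at most `(1 - q) / p θtil`,
at every time. With `q = 1 - p θtil / 2` this bound is `1 / 2`.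
-/


open Filter MeasureTheory
open scoped Classical ENNReal

/-- The cylinder event that agent ℓ's first `t` signals agree with those at ω. -/
def cyl {Θ : Type*} {L : ℕ} {X : Fin L → Type*}
    (ℓ : Fin L) (t : ℕ) (ω : Θ × (ℕ → ∀ ℓ, X ℓ)) : Set (Θ × (ℕ → ∀ ℓ, X ℓ)) :=
  {ω' | ∀ s : Fin t, ω'.2 s.val ℓ = ω.2 s.val ℓ}

/-- `B^q_{ℓt}(F)`: the event that agent ℓ attaches conditional probability at least `q`
to the event `F` given its time-`t` history, i.e.
`P(F ∩ cyl) ≥ q·P(cyl)` where `cyl` is agent ℓ's time-t cylinder. -/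
def Bel {Θ : Type*} [MeasurableSpace Θ] {L : ℕ} {X : Fin L → Type*}
    [∀ ℓ, MeasurableSpace (X ℓ)]
    (P : Measure (Θ × (ℕ → ∀ ℓ, X ℓ))) (q : ℝ) (ℓ : Fin L) (t : ℕ)
    (F : Set (Θ × (ℕ → ∀ ℓ, X ℓ))) : Set (Θ × (ℕ → ∀ ℓ, X ℓ)) :=
  {ω | ENNReal.ofReal q * P (cyl ℓ t ω) ≤ P (F ∩ cyl ℓ t ω)}

/-- `B^q_t(F) = ∩_ℓ B^q_{ℓt}(F)`: all agents attach probability at least q to F. -/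
def BelAll {Θ : Type*} [MeasurableSpace Θ] {L : ℕ} {X : Fin L → Type*}
    [∀ ℓ, MeasurableSpace (X ℓ)]
    (P : Measure (Θ × (ℕ → ∀ ℓ, X ℓ))) (q : ℝ) (t : ℕ)
    (F : Set (Θ × (ℕ → ∀ ℓ, X ℓ))) : Set (Θ × (ℕ → ∀ ℓ, X ℓ)) :=
  ⋂ ℓ, Bel P q ℓ t F

/-- `C^q_t(F) = ∩_{n≥1} [B^q_t]^n(F)`: the event that `F` is common q-belief at `t`. -/
def Cbel {Θ : Type*} [MeasurableSpace Θ] {L : ℕ} {X : Fin L → Type*}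
    [∀ ℓ, MeasurableSpace (X ℓ)]
    (P : Measure (Θ × (ℕ → ∀ ℓ, X ℓ))) (q : ℝ) (t : ℕ)
    (F : Set (Θ × (ℕ → ∀ ℓ, X ℓ))) : Set (Θ × (ℕ → ∀ ℓ, X ℓ)) :=
  ⋂ n : ℕ, (BelAll P q t)^[n + 1] F

/-- The event that agent `ℓ`'s first `t` signals form the history `g`. -/
def histEvent {Θ : Type*} {L : ℕ} {X : Fin L → Type*} (ℓ : Fin L) (t : ℕ) (g : Fin t → X ℓ) :
    Set (Θ × (ℕ → ∀ ℓ, X ℓ)) :=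
  {ω | ∀ s : Fin t, ω.2 s.val ℓ = g s}

lemma measurableSet_histEvent {Θ : Type*} [MeasurableSpace Θ] {L : ℕ} {X : Fin L → Type*}
    [∀ ℓ, MeasurableSpace (X ℓ)] [∀ ℓ, MeasurableSingletonClass (X ℓ)]
    (ℓ : Fin L) (t : ℕ) (g : Fin t → X ℓ) :
    MeasurableSet (histEvent (Θ := Θ) ℓ t g) := by
  unfold histEvent
  simp only [Set.ofPred_forall]
  refine MeasurableSet.iInter fun s => ?_
  have hm : Measurable fun ω : Θ × (ℕ → ∀ ℓ, X ℓ) => ω.2 s.val ℓ := by fun_prop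
  exact hm (measurableSet_singleton (g s))

lemma sum_measureReal_histEvent_le {Θ : Type*} [MeasurableSpace Θ] {L : ℕ} {X : Fin L → Type*}
    [∀ ℓ, Fintype (X ℓ)] [∀ ℓ, MeasurableSpace (X ℓ)] [∀ ℓ, MeasurableSingletonClass (X ℓ)]
    (P : Measure (Θ × (ℕ → ∀ ℓ, X ℓ))) [IsProbabilityMeasure P]
    (ℓ : Fin L) (t : ℕ) (G : Finset (Fin t → X ℓ)) :
    ∑ g ∈ G, P.real (histEvent ℓ t g) ≤ 1 := by
  rw [← measureReal_biUnion_finset]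
  · exact measureReal_le_one
  · intro g _ g' _ hne
    refine Set.disjoint_left.2 fun ω h h' => hne (funext fun s => ?_)
    exact (h s).symm.trans (h' s)
  · exact fun g _ => measurableSet_histEvent ℓ t g

/-- Agent `ℓ`'s signals are i.i.d. with law `φ θ ℓ` given `θ`: the joint probability of the state
`θ` and a history `g` depends on `π θ` only through its marginal. -/
lemma state_inter_hist
    {Θ : Type*} [MeasurableSpace Θ] [MeasurableSingletonClass Θ]
    {L : ℕ} {X : Fin L → Type*} [∀ ℓ, Fintype (X ℓ)]
    [∀ ℓ, MeasurableSpace (X ℓ)] [∀ ℓ, MeasurableSingletonClass (X ℓ)]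
    (p : Θ → ℝ) (hp0 : ∀ θ, 0 < p θ)
    (π : Θ → (∀ ℓ, X ℓ) → ℝ) (hπ0 : ∀ θ x, 0 ≤ π θ x)
    (φ : Θ → ∀ ℓ, X ℓ → ℝ)
    (hφ : ∀ θ ℓ x, φ θ ℓ x = ∑ y ∈ Finset.univ.filter (fun y => y ℓ = x), π θ y)
    (P : Measure (Θ × (ℕ → ∀ ℓ, X ℓ))) [IsProbabilityMeasure P]
    (hP : ∀ (θ : Θ) (t : ℕ) (h : Fin t → ∀ ℓ, X ℓ),
      P {ω | ω.1 = θ ∧ ∀ s : Fin t, ω.2 s.val = h s} =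
        ENNReal.ofReal (p θ * ∏ s, π θ (h s)))
    (θ : Θ) (ℓ : Fin L) (t : ℕ) (g : Fin t → X ℓ) :
    P.real ({ω | ω.1 = θ} ∩ histEvent ℓ t g) = p θ * ∏ s, φ θ ℓ (g s) := by
  set H : Finset (Fin t → ∀ ℓ, X ℓ) :=
    Fintype.piFinset fun s => Finset.univ.filter fun y : ∀ ℓ, X ℓ => y ℓ = g s with hH
  have hset : ({ω | ω.1 = θ} ∩ histEvent ℓ t g : Set (Θ × (ℕ → ∀ ℓ, X ℓ))) =
      ⋃ h ∈ H, {ω | ω.1 = θ ∧ ∀ s : Fin t, ω.2 s.val = h s} := by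
    ext ω
    simp only [histEvent, Set.mem_inter_iff, Set.mem_ofPred_eq, Set.mem_iUnion, hH,
      Fintype.mem_piFinset, Finset.mem_filter, Finset.mem_univ, true_and, exists_prop]
    constructor
    · rintro ⟨h1, h2⟩
      exact ⟨fun s => ω.2 s.val, h2, h1, fun _ => rfl⟩
    · rintro ⟨h, h1, h2, h3⟩
      exact ⟨h2, fun s => by rw [h3 s, h1 s]⟩
  rw [hset, measureReal_biUnion_finset]
  · have h1 : ∀ h ∈ H, P.real {ω | ω.1 = θ ∧ ∀ s : Fin t, ω.2 s.val = h s} =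
        p θ * ∏ s, π θ (h s) := fun h _ => by
      rw [measureReal_def, hP, ENNReal.toReal_ofReal]
      exact mul_nonneg (hp0 θ).le (Finset.prod_nonneg fun s _ => hπ0 θ _)
    rw [Finset.sum_congr rfl h1, ← Finset.mul_sum, hH]
    simp_rw [hφ]
    rw [Finset.prod_univ_sum]
  · intro h _ h' _ hne
    refine Set.disjoint_left.2 fun ω hω hω' => hne (funext fun s => ?_)
    exact (hω.2 s).symm.trans (hω'.2 s)
  · intro h _
    have hm1 : Measurable fun ω : Θ × (ℕ → ∀ ℓ, X ℓ) => ω.1 := by fun_prop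
    have hm2 : ∀ s : Fin t, Measurable fun ω : Θ × (ℕ → ∀ ℓ, X ℓ) => ω.2 s.val := by
      intro s; fun_prop
    refine (hm1 (measurableSet_singleton θ)).inter ?_
    have hI : {ω : Θ × (ℕ → ∀ ℓ, X ℓ) | ∀ s : Fin t, ω.2 s.val = h s} =
        ⋂ s : Fin t, {ω | ω.2 s.val = h s} := Set.ofPred_forall _
    change MeasurableSet {ω : Θ × (ℕ → ∀ ℓ, X ℓ) | ∀ s : Fin t, ω.2 s.val = h s}
    rw [hI]
    exact MeasurableSet.iInter fun s => hm2 s (measurableSet_singleton (h s))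

/-- necessity. States are drawn from the full-support prior `p` and,
given θ, signal profiles are i.i.d. draws from `π^θ`; `φ^θ_ℓ` is the marginal on agent
ℓ's signals.  If `Q̂ ⊆ Θ` is not a union-measurable cell of the commonly identified
partition — i.e. some agent ℓ has a cell of its identification partition containing both a
state θ̂ ∈ Q̂ and a state θ̃ ∉ Q̂ (same ℓ-marginals) — then `Q̂` is not commonly learned:
it is not the case that for all q ∈ (0,1) and all θ ∈ Q̂ the conditional probability
`P^θ(C^q_t(Q̂)) = P(C^q_t(Q̂) ∩ {θ}) / P({θ})` tends to 1 as t → ∞. -/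
theorem statement1
    {Θ : Type*} [Fintype Θ] [MeasurableSpace Θ] [MeasurableSingletonClass Θ]
    {L : ℕ} {X : Fin L → Type*} [∀ ℓ, Fintype (X ℓ)]
    [∀ ℓ, MeasurableSpace (X ℓ)] [∀ ℓ, MeasurableSingletonClass (X ℓ)]
    (p : Θ → ℝ) (hp0 : ∀ θ, 0 < p θ) (hp1 : ∑ θ, p θ = 1)
    (π : Θ → (∀ ℓ, X ℓ) → ℝ) (hπ0 : ∀ θ x, 0 ≤ π θ x) (hπ1 : ∀ θ, ∑ x, π θ x = 1)
    (φ : Θ → ∀ ℓ, X ℓ → ℝ)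
    (hφ : ∀ θ ℓ x, φ θ ℓ x = ∑ y ∈ Finset.univ.filter (fun y => y ℓ = x), π θ y)
    -- `P` is the induced probability measure on `Ω = Θ × X^∞`.
    (P : Measure (Θ × (ℕ → ∀ ℓ, X ℓ))) [IsProbabilityMeasure P]
    (hP : ∀ (θ : Θ) (t : ℕ) (h : Fin t → ∀ ℓ, X ℓ),
      P {ω | ω.1 = θ ∧ ∀ s : Fin t, ω.2 s.val = h s} =
        ENNReal.ofReal (p θ * ∏ s, π θ (h s)))
    -- `Q̂ ∉ QI`: some agent cannot distinguish a state in `Q̂` from one outside it.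
    (Qhat : Set Θ)
    (hQ : ∃ (ℓ : Fin L) (θhat θtil : Θ),
      θhat ∈ Qhat ∧ θtil ∉ Qhat ∧ φ θhat ℓ = φ θtil ℓ) :
    ¬ (∀ q : ℝ, 0 < q → q < 1 → ∀ θ ∈ Qhat,
        Tendsto
          (fun t : ℕ =>
            P (Cbel P q t {ω | ω.1 ∈ Qhat} ∩ {ω | ω.1 = θ}) / P {ω | ω.1 = θ})
          atTop (nhds (1 : ℝ≥0∞))) := by
  obtain ⟨ℓ, θhat, θtil, hin, hout, heq⟩ := hQ
  intro hlearn
  have hle1 : p θtil ≤ 1 :=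
    hp1 ▸ Finset.single_le_sum (fun θ _ => (hp0 θ).le) (Finset.mem_univ θtil)
  have htil := hp0 θtil
  have hhat := hp0 θhat
  set q : ℝ := 1 - p θtil / 2 with hq
  have hq0 : 0 < q := by linarith
  have hlim := hlearn q hq0 (by linarith) θhat hin
  set F : Set (Θ × (ℕ → ∀ ℓ, X ℓ)) := {ω | ω.1 ∈ Qhat} with hF
  have hFm : MeasurableSet F := by
    have hm1 : Measurable fun ω : Θ × (ℕ → ∀ ℓ, X ℓ) => ω.1 := by fun_prop
    exact hm1 (Set.toFinite Qhat).measurableSet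
  have hθ : P {ω | ω.1 = θhat} = ENNReal.ofReal (p θhat) := by
    simpa using hP θhat 0 Fin.elim0
  have hbound : ∀ t : ℕ, P (Cbel P q t F ∩ {ω | ω.1 = θhat}) / P {ω | ω.1 = θhat} ≤
      ENNReal.ofReal (1 / 2) := by
    intro t
    set G : Finset (Fin t → X ℓ) := Finset.univ.filter fun g =>
      ENNReal.ofReal q * P (histEvent ℓ t g) ≤ P (F ∩ histEvent ℓ t g) with hG
    have hsub : Cbel P q t F ∩ {ω | ω.1 = θhat} ⊆
        ⋃ g ∈ G, {ω | ω.1 = θhat} ∩ histEvent ℓ t g := by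
      rintro ω ⟨hC, hω⟩
      have hB : ω ∈ Bel P q ℓ t F := Set.mem_iInter.1 (Set.mem_iInter.1 hC 0) ℓ
      refine Set.mem_biUnion (x := fun s : Fin t => ω.2 s.val ℓ) ?_ ⟨hω, fun _ => rfl⟩
      exact Finset.mem_coe.2 (Finset.mem_filter.2 ⟨Finset.mem_univ _, hB⟩)
    have hone : ∀ g ∈ G, p θtil * ∏ s, φ θhat ℓ (g s) ≤
        (1 - q) * P.real (histEvent ℓ t g) := by
      intro g hg
      have hg' := (Finset.mem_filter.1 hg).2
      have hg2 : q * P.real (histEvent ℓ t g) ≤ P.real (F ∩ histEvent ℓ t g) := by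
        have := ENNReal.toReal_mono (measure_ne_top _ _) hg'
        rwa [ENNReal.toReal_mul, ENNReal.toReal_ofReal hq0.le] at this
      have hsplit := measureReal_inter_add_sdiff (μ := P) (s := histEvent ℓ t g) hFm
      have hmono : P.real ({ω | ω.1 = θtil} ∩ histEvent ℓ t g) ≤
          P.real (histEvent ℓ t g \ F) := by
        refine measureReal_mono ?_
        rintro ω ⟨h1, h2⟩
        refine ⟨h2, fun h3 => hout ?_⟩
        have h1' : ω.1 = θtil := h1
        exact h1' ▸ h3
      rw [state_inter_hist p hp0 π hπ0 φ hφ P hP, ← heq] at hmono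
      rw [Set.inter_comm] at hsplit
      linarith
    have hsum : P.real (Cbel P q t F ∩ {ω | ω.1 = θhat}) ≤
        p θhat * ∑ g ∈ G, ∏ s, φ θhat ℓ (g s) := by
      refine (measureReal_mono hsub (measure_ne_top _ _)).trans ((measureReal_biUnion_finset_le _ _).trans ?_)
      rw [Finset.mul_sum]
      exact (Finset.sum_congr rfl fun g _ =>
        state_inter_hist p hp0 π hπ0 φ hφ P hP θhat ℓ t g).le
    have hA : ∑ g ∈ G, ∏ s, φ θhat ℓ (g s) ≤ 1 / 2 := by
      have h1 := Finset.sum_le_sum hone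
      rw [← Finset.mul_sum, ← Finset.mul_sum] at h1
      have h2 := sum_measureReal_histEvent_le P ℓ t G
      have h3 : (1 - q) = p θtil / 2 := by rw [hq]; ring
      rw [h3] at h1
      nlinarith
    rw [hθ]
    refine ENNReal.div_le_of_le_mul ?_
    rw [← ENNReal.ofReal_mul (by norm_num), ← ofReal_measureReal]
    exact ENNReal.ofReal_le_ofReal (by nlinarith)
  have hfinal := le_of_tendsto hlim (Eventually.of_forall hbound)
  rw [ENNReal.one_le_ofReal] at hfinal
  norm_num at hfinal
end

section
/- (Lemma 1, part 3.) Suppose every marginal φ^θ_ℓ has full support. There exists ε̄ > 0 such that for every ε ∈ (0, ε̄) there exists b > 0 with: for every agent ℓ, every state θ, every time t, and every history h_{ℓt} ∈ X_ℓ^t whose empirical measure φ̂_{ℓt} satisfies ‖φ̂_{ℓt} − φ^θ_ℓ‖_TV ≤ ε, the Bayesian posterior on agent ℓ's identification cell Q_ℓ ∋ θ satisfies P(Q_ℓ | h_{ℓt}) ≥ 1 − e^{−tb}/p^θ, where P(Q | h_{ℓt}) := [Σ_{θ''∈Q} p^{θ''} ∏_{s<t} φ^{θ''}_ℓ(x_{ℓs})]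 / [Σ_{θ'∈Θ} p^{θ'} ∏_{s<t} φ^{θ'}_ℓ(x_{ℓs})]. -/
/-!
For a pair of states `θ, θ'` that agent `ℓ` can distinguish, the log-likelihood ratio of a history
is `t * ∑ x, emp h x * log (φ^{θ'} x / φ^θ x)`. At `emp h = φ^θ` the sum is minus the
Kullback-Leibler divergence, which is strictly negative by `log y < y - 1` for `y ≠ 1`, and it
is linear in `emp h`; so it stays below `-δ` on the total variation ball of radius `δ` once `δ` is
small (`eventually_likelihood_le`). There are finitely many triples `(ℓ, θ, θ')`, so a single `δ`
serves as both the radius bound and the exponential rate. Bounding the likelihood of every state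
outside the cell by `exp (-(t * δ))` times that of `θ`, and the normalizing constant below by
`p^θ` times the likelihood of `θ`, gives the bound on the posterior (`one_sub_le_post`).
-/

open scoped Classical

/-- Total variation norm `‖f‖_TV = (1/2) Σ_x |f x|` on a finite set. -/
noncomputable def tv {X : Type*} [Fintype X] (f : X → ℝ) : ℝ := (1 / 2) * ∑ x, |f x|

/-- Empirical measure of a length-`t` history of signals. -/
noncomputable def emp {X : Type*} [Fintype X] {t : ℕ} (h : Fin t → X) (x : X) : ℝ :=
  ((Finset.univ.filter fun s => h s = x).card : ℝ) / t

/-- Bayesian posterior probability of the set of states `Q` given a length-`t` history of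
i.i.d. signals, with prior `p` and state-dependent signal distributions `φ`. -/
noncomputable def post {Θ : Type*} [Fintype Θ] {X : Type*} [Fintype X]
    (p : Θ → ℝ) (φ : Θ → X → ℝ) (Q : Finset Θ) {t : ℕ} (h : Fin t → X) : ℝ :=
  (∑ θ ∈ Q, p θ * ∏ s, φ θ (h s)) / (∑ θ', p θ' * ∏ s, φ θ' (h s))

/-- The sample sum of `g` is `t` times its mean under the empirical measure, also for `t = 0`,
where `emp` takes the junk value `0`. -/
lemma sum_comp_eq_emp {X : Type*} [Fintype X] {t : ℕ} (h : Fin t → X) (g : X → ℝ) :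
    ∑ s, g (h s) = t * ∑ x, emp h x * g x := by
  rcases Nat.eq_zero_or_pos t with rfl | ht
  · simp
  have ht' : (t : ℝ) ≠ 0 := by positivity
  rw [Finset.mul_sum, ← Finset.sum_fiberwise Finset.univ h]
  refine Finset.sum_congr rfl fun x _ => ?_
  rw [Finset.sum_congr rfl (g := fun _ => g x)
    (fun s hs => by rw [(Finset.mem_filter.1 hs).2])]
  simp only [Finset.sum_const, nsmul_eq_mul, emp]
  field_simp

/-- Gibbs' inequality, with strictness for distinct distributions. -/
lemma sum_mul_log_div_neg {X : Type*} [Fintype X] {φ ψ : X → ℝ}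
    (hφ : ∀ x, 0 < φ x) (hψ : ∀ x, 0 < ψ x) (hφ1 : ∑ x, φ x = 1) (hψ1 : ∑ x, ψ x = 1)
    (hne : ψ ≠ φ) : ∑ x, φ x * Real.log (ψ x / φ x) < 0 := by
  obtain ⟨x₀, hx₀⟩ := Function.ne_iff.1 hne
  have hsub : ∀ x, φ x * (ψ x / φ x - 1) = ψ x - φ x := fun x => by
    have := (hφ x).ne'
    field_simp
  calc ∑ x, φ x * Real.log (ψ x / φ x) < ∑ x, (ψ x - φ x) := by
        refine Finset.sum_lt_sum (fun x _ => ?_) ⟨x₀, Finset.mem_univ _, ?_⟩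
        · rw [← hsub x]
          exact mul_le_mul_of_nonneg_left
            (Real.log_le_sub_one_of_pos (div_pos (hψ x) (hφ x))) (hφ x).le
        · rw [← hsub x₀]
          refine mul_lt_mul_of_pos_left
            (Real.log_lt_sub_one_of_pos (div_pos (hψ x₀) (hφ x₀)) ?_) (hφ x₀)
          rwa [Ne, div_eq_one_iff_eq (hφ x₀).ne']
    _ = 0 := by rw [Finset.sum_sub_distrib, hφ1, hψ1, sub_self]

/-- For all small `δ > 0`, histories whose empirical measure is `δ`-close to `φ` are less likely
under `ψ ≠ φ` than under `φ` by a factor of at least `exp (t * δ)`. -/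
lemma eventually_likelihood_le {X : Type*} [Fintype X] {φ ψ : X → ℝ}
    (hφ : ∀ x, 0 < φ x) (hψ : ∀ x, 0 < ψ x) (hφ1 : ∑ x, φ x = 1) (hψ1 : ∑ x, ψ x = 1)
    (hne : ψ ≠ φ) :
    ∀ᶠ δ in nhdsWithin (0 : ℝ) (Set.Ioi 0), ∀ (t : ℕ) (h : Fin t → X),
      tv (fun x => emp h x - φ x) ≤ δ →
        ∏ s, ψ (h s) ≤ Real.exp (-(t * δ)) * ∏ s, φ (h s) := by
  set g : X → ℝ := fun x => Real.log (ψ x / φ x) with hg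
  set M : ℝ := ∑ x, |g x| with hM
  have hK : ∑ x, φ x * g x < 0 := sum_mul_log_div_neg hφ hψ hφ1 hψ1 hne
  have hM0 : 0 ≤ M := Finset.sum_nonneg fun x _ => abs_nonneg _
  have hsmall : ∀ᶠ δ in nhdsWithin (0 : ℝ) (Set.Ioi 0),
      ∑ x, φ x * g x + 2 * M * δ + δ < 0 := by
    refine Filter.Eventually.filter_mono nhdsWithin_le_nhds ?_
    have hc : Continuous fun δ : ℝ => ∑ x, φ x * g x + 2 * M * δ + δ := by fun_prop
    exact hc.continuousAt.eventually_lt continuousAt_const (by simpa using hK)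
  filter_upwards [hsmall] with δ hδ t h htv
  have hdev : ∑ x, (emp h x - φ x) * g x ≤ 2 * δ * M := by
    calc ∑ x, (emp h x - φ x) * g x ≤ ∑ x, |emp h x - φ x| * M := by
          refine Finset.sum_le_sum fun x _ => (le_abs_self _).trans ?_
          rw [abs_mul]
          exact mul_le_mul_of_nonneg_left
            (Finset.single_le_sum (f := fun x => |g x|) (fun x _ => abs_nonneg _)
              (Finset.mem_univ x)) (abs_nonneg _)
      _ = (∑ x, |emp h x - φ x|) * M := by rw [Finset.sum_mul]
      _ ≤ 2 * δ * M := by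
          refine mul_le_mul_of_nonneg_right ?_ hM0
          unfold tv at htv
          linarith
  have hmean : ∑ x, emp h x * g x ≤ -δ := by
    simp only [sub_mul, Finset.sum_sub_distrib] at hdev
    linarith
  have hsum : ∑ s, g (h s) ≤ -(t * δ) := by
    rw [sum_comp_eq_emp]
    have := mul_le_mul_of_nonneg_left hmean (Nat.cast_nonneg (α := ℝ) t)
    linarith
  calc ∏ s, ψ (h s) = ∏ s, Real.exp (g (h s)) * φ (h s) := by
        refine Finset.prod_congr rfl fun s _ => ?_
        rw [hg, Real.exp_log (div_pos (hψ _) (hφ _)), div_mul_cancel₀ _ (hφ _).ne']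
    _ = Real.exp (∑ s, g (h s)) * ∏ s, φ (h s) := by
        rw [Finset.prod_mul_distrib, Real.exp_sum]
    _ ≤ _ := mul_le_mul_of_nonneg_right (Real.exp_le_exp.2 hsum)
        (Finset.prod_nonneg fun s _ => (hφ _).le)

/-- If each state outside `Q` has likelihood at most `c` times that of `θ`, the posterior
probability of the complement of `Q` is at most `c / p θ`. -/
lemma one_sub_le_post {Θ : Type*} [Fintype Θ] {X : Type*} [Fintype X] {p : Θ → ℝ}
    (hp0 : ∀ θ, 0 < p θ) (hp1 : ∑ θ, p θ = 1) {φ : Θ → X → ℝ} (hφ : ∀ θ x, 0 < φ θ x)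
    (Q : Finset Θ) {t : ℕ} (h : Fin t → X) (θ : Θ) {c : ℝ} (hc : 0 ≤ c)
    (hQ : ∀ θ' ∉ Q, ∏ s, φ θ' (h s) ≤ c * ∏ s, φ θ (h s)) :
    1 - c / p θ ≤ post p φ Q h := by
  have hl : ∀ θ', 0 < ∏ s, φ θ' (h s) := fun θ' => Finset.prod_pos fun s _ => hφ _ _
  have hterm : ∀ θ', 0 < p θ' * ∏ s, φ θ' (h s) := fun θ' => mul_pos (hp0 _) (hl _)
  have hD : p θ * ∏ s, φ θ (h s) ≤ ∑ θ', p θ' * ∏ s, φ θ' (h s) :=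
    Finset.single_le_sum (f := fun θ' => p θ' * ∏ s, φ θ' (h s))
      (fun θ' _ => (hterm θ').le) (Finset.mem_univ θ)
  have hsplit := Finset.sum_add_sum_compl Q fun θ' => p θ' * ∏ s, φ θ' (h s)
  have hcompl : ∑ θ' ∈ Qᶜ, p θ' * ∏ s, φ θ' (h s) ≤ c * ∏ s, φ θ (h s) := by
    calc ∑ θ' ∈ Qᶜ, p θ' * ∏ s, φ θ' (h s)
        ≤ ∑ θ' ∈ Qᶜ, p θ' * (c * ∏ s, φ θ (h s)) :=
          Finset.sum_le_sum fun θ' hθ' =>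
            mul_le_mul_of_nonneg_left (hQ θ' (Finset.mem_compl.1 hθ')) (hp0 _).le
      _ ≤ ∑ θ', p θ' * (c * ∏ s, φ θ (h s)) :=
          Finset.sum_le_univ_sum_of_nonneg fun θ' =>
            mul_nonneg (hp0 _).le (mul_nonneg hc (hl _).le)
      _ = c * ∏ s, φ θ (h s) := by rw [← Finset.sum_mul, hp1, one_mul]
  have hbound : c * ∏ s, φ θ (h s) ≤ c / p θ * ∑ θ', p θ' * ∏ s, φ θ' (h s) := by
    calc c * ∏ s, φ θ (h s) = c / p θ * (p θ * ∏ s, φ θ (h s)) := by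
          have := (hp0 θ).ne'
          field_simp
      _ ≤ _ := mul_le_mul_of_nonneg_left hD (div_nonneg hc (hp0 θ).le)
  rw [post, le_div_iff₀ ((hterm θ).trans_le hD)]
  linarith

/-- Lemma 1, part 3. If every marginal has full support, there is ε̄ > 0
such that for every ε ∈ (0, ε̄) there is b > 0 such that: whenever agent ℓ's time-t
empirical measure is within ε of `φ^θ_ℓ`, the posterior on agent ℓ's identification cell
`Q_ℓ ∋ θ` (the set of states θ' with `φ^{θ'}_ℓ = φ^θ_ℓ`) is at least `1 − e^{−tb}/p^θ`. -/
theorem statement6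
    {Θ : Type*} [Fintype Θ] {L : ℕ} (X : Fin L → Type*) [∀ ℓ, Fintype (X ℓ)]
    (p : Θ → ℝ) (hp0 : ∀ θ, 0 < p θ) (hp1 : ∑ θ, p θ = 1)
    (φ : Θ → ∀ ℓ, X ℓ → ℝ)
    (hφ0 : ∀ θ ℓ x, 0 < φ θ ℓ x) (hφ1 : ∀ θ ℓ, ∑ x, φ θ ℓ x = 1) :
    ∃ εbar > 0, ∀ ε : ℝ, 0 < ε → ε < εbar → ∃ b > 0,
      ∀ (ℓ : Fin L) (θ : Θ) (t : ℕ) (h : Fin t → X ℓ),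
        tv (fun x => emp h x - φ θ ℓ x) ≤ ε →
        1 - Real.exp (-(t * b)) / p θ ≤
          post p (fun θ' => φ θ' ℓ) (Finset.univ.filter fun θ' => φ θ' ℓ = φ θ ℓ) h := by
  have hev : ∀ᶠ δ in nhdsWithin (0 : ℝ) (Set.Ioi 0), ∀ (ℓ : Fin L) (θ θ' : Θ),
      φ θ' ℓ ≠ φ θ ℓ → ∀ (t : ℕ) (h : Fin t → X ℓ),
        tv (fun x => emp h x - φ θ ℓ x) ≤ δ →
          ∏ s, φ θ' ℓ (h s) ≤ Real.exp (-(t * δ)) * ∏ s, φ θ ℓ (h s) := by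
    simp only [Filter.eventually_all]
    intro ℓ θ θ' hne
    exact eventually_likelihood_le (hφ0 θ ℓ) (hφ0 θ' ℓ) (hφ1 θ ℓ) (hφ1 θ' ℓ) hne
  obtain ⟨δ, hδ, hδ0⟩ := (hev.and self_mem_nhdsWithin).exists
  refine ⟨δ, hδ0, fun ε _ hε => ⟨δ, hδ0, fun ℓ θ t h htv => ?_⟩⟩
  refine one_sub_le_post hp0 hp1 (fun θ' x => hφ0 θ' ℓ x) _ h θ (Real.exp_pos _).le ?_
  intro θ' hθ'
  exact hδ ℓ θ θ' (by simpa using hθ') t h (htv.trans hε.le)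
end

section
/- (Necessity core, equation (13).) Suppose every marginal φ^θ_ℓ has full support, and let Q̂ ⊆ Θ contain a state θ̂ and exclude a state θ̃ with φ^{θ̃}_ℓ = φ^{θ̂}_ℓ for some agent ℓ. Then for every q > 1 − p^{θ̃}: lim_{t→∞} P^{θ̂}( { histories h_{ℓt} : P(Q̂ | h_{ℓt}) ≥ q } ) = 0, i.e. conditional on θ̂, the probability that agent ℓ ever q-believes Q̂ at time t vanishes as t → ∞. -/
/-!
The posterior odds of `θtil` against `θhat` stay at their prior value, since the two states generate
the same signals. Write `L θ h` for the likelihood of a history. If the posterior of `Qhat` is at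
least `q`, the excluded state satisfies `p θtil * L θhat h ≤ (1 - q) * ∑ θ, p θ * L θ h`. The states
with the same signal distribution as `θhat` contribute at most `(1 - q) * L θhat h` on the right,
so, as `p θtil > 1 - q`, the likelihood of the truth is bounded by a constant multiple of the total
likelihood of the distinguishable states (`likelihood_le_of_le_post`). Taking a geometric mean with
`L θhat h` itself turns this into a bound by a constant times
`∑ θ, ∏ s, √(φ θ (h s) * φ θhat (h s))`, whose sum over histories is a finite sum of `t`-th powers
of Bhattacharyya coefficients. These are less than one for distinct distributions
(`sum_sqrt_mul_lt_one`), so the probability decays geometrically.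
-/

open Filter
open scoped Classical

/-- The Bhattacharyya coefficient of two distinct probability vectors is less than one: this is the
AM-GM inequality, strict at a point where the vectors differ. -/
lemma sum_sqrt_mul_lt_one {X : Type*} [Fintype X] (f g : X → ℝ)
    (hf : ∀ x, 0 < f x) (hg : ∀ x, 0 < g x) (hf1 : ∑ x, f x = 1) (hg1 : ∑ x, g x = 1)
    (hne : f ≠ g) : ∑ x, √(f x * g x) < 1 := by
  obtain ⟨x₀, hx₀⟩ := Function.ne_iff.mp hne
  have hmean : ∑ x, (f x + g x) / 2 = 1 := by
    rw [← Finset.sum_div, Finset.sum_add_distrib, hf1, hg1]; norm_num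
  rw [← hmean]
  refine Finset.sum_lt_sum (fun x _ => ?_) ⟨x₀, Finset.mem_univ _, ?_⟩
  · refine Real.sqrt_le_iff.mpr ⟨by linarith [hf x, hg x], ?_⟩
    nlinarith [sq_nonneg (f x - g x)]
  · refine (Real.sqrt_lt' (by linarith [hf x₀, hg x₀])).mpr ?_
    nlinarith [sq_pos_of_ne_zero (sub_ne_zero.mpr hx₀)]

/-- On a history where `Qhat` is `q`-believed, the likelihood of `θhat` is dominated by the total
likelihood of the states that are distinguishable from it. -/
lemma likelihood_le_of_le_post {Θ : Type*} [Fintype Θ] {X : Type*} [Fintype X]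
    (p : Θ → ℝ) (hp0 : ∀ θ, 0 < p θ) (hp1 : ∑ θ, p θ = 1)
    (φ : Θ → X → ℝ) (hφ0 : ∀ θ x, 0 < φ θ x)
    (Qhat : Finset Θ) (θhat θtil : Θ)
    (htil : θtil ∉ Qhat) (heq : φ θtil = φ θhat)
    (q : ℝ) (hq : 1 - p θtil < q) {t : ℕ} (h : Fin t → X) (hpost : q ≤ post p φ Qhat h) :
    (p θtil - (1 - q)) * ∏ s, φ θhat (h s) ≤
      ∑ θ with φ θ ≠ φ θhat, ∏ s, φ θ (h s) := by
  have hL : ∀ θ, 0 < ∏ s, φ θ (h s) := fun θ => Finset.prod_pos fun s _ => hφ0 _ _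
  have hp_le : ∀ θ, p θ ≤ 1 := fun θ => hp1 ▸
    Finset.single_le_sum (fun i _ => (hp0 i).le) (Finset.mem_univ θ)
  have hterm : ∀ θ, 0 < p θ * ∏ s, φ θ (h s) := fun θ => mul_pos (hp0 θ) (hL θ)
  have hZ : 0 < ∑ θ, p θ * ∏ s, φ θ (h s) :=
    Finset.sum_pos (fun θ _ => hterm θ) ⟨θhat, Finset.mem_univ _⟩
  have hR : 0 ≤ ∑ θ with φ θ ≠ φ θhat, ∏ s, φ θ (h s) :=
    Finset.sum_nonneg fun θ _ => (hL θ).le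
  have hqZ := (le_div_iff₀ hZ).mp hpost
  have hins : p θtil * ∏ s, φ θhat (h s) + ∑ θ ∈ Qhat, p θ * ∏ s, φ θ (h s) ≤
      ∑ θ, p θ * ∏ s, φ θ (h s) := by
    rw [← heq, ← Finset.sum_insert (f := fun θ => p θ * ∏ s, φ θ (h s)) htil]
    exact Finset.sum_le_sum_of_subset_of_nonneg (Finset.subset_univ _) fun θ _ _ => (hterm θ).le
  have hsplit : ∑ θ, p θ * ∏ s, φ θ (h s) ≤
      ∏ s, φ θhat (h s) + ∑ θ with φ θ ≠ φ θhat, ∏ s, φ θ (h s) := by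
    rw [← Finset.sum_filter_add_sum_filter_not Finset.univ (fun θ => φ θ = φ θhat)
      (fun θ => p θ * ∏ s, φ θ (h s))]
    refine add_le_add ?_ (Finset.sum_le_sum fun θ _ => mul_le_of_le_one_left (hL θ).le (hp_le θ))
    calc ∑ θ with φ θ = φ θhat, p θ * ∏ s, φ θ (h s)
        = (∑ θ with φ θ = φ θhat, p θ) * ∏ s, φ θhat (h s) := by
          rw [Finset.sum_mul]
          refine Finset.sum_congr rfl fun θ hθ => ?_
          rw [(Finset.mem_filter.mp hθ).2]
      _ ≤ ∏ s, φ θhat (h s) := by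
          refine mul_le_of_le_one_left (hL θhat).le ?_
          rw [← hp1]
          exact Finset.sum_le_sum_of_subset_of_nonneg (Finset.subset_univ _)
            fun θ _ _ => (hp0 θ).le
  have hpt := hterm θtil
  rw [heq] at hpt
  -- The excluded state keeps positive posterior weight, so the posterior of `Qhat` is below one.
  have hq1 : 0 < 1 - q := by
    by_contra hcon
    nlinarith
  have hq0 : 1 - q ≤ 1 := by linarith [hp_le θtil]
  nlinarith [mul_le_mul_of_nonneg_left hsplit hq1.le, mul_le_mul_of_nonneg_right hq0 hR]

/-- necessity core, equation (13). Suppose every signal distribution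
has full support, and `Q̂ ⊆ Θ` contains θ̂ but excludes a state θ̃ with
`φ^{θ̃}_ℓ = φ^{θ̂}_ℓ`.  Then for every `q > 1 − p^{θ̃}`, the probability conditional on θ̂
that agent ℓ q-believes `Q̂` at time t vanishes as t → ∞.  The conditional probability of
a time-t event is the sum over length-t histories of `∏_{s<t} φ^{θ̂}(x_s)` times the
indicator of the event. -/
theorem statement12
    {Θ : Type*} [Fintype Θ] {X : Type*} [Fintype X]
    (p : Θ → ℝ) (hp0 : ∀ θ, 0 < p θ) (hp1 : ∑ θ, p θ = 1)
    (φ : Θ → X → ℝ)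
    (hφ0 : ∀ θ x, 0 < φ θ x) (hφ1 : ∀ θ, ∑ x, φ θ x = 1)
    (Qhat : Finset Θ) (θhat θtil : Θ)
    (hhat : θhat ∈ Qhat) (htil : θtil ∉ Qhat) (heq : φ θtil = φ θhat)
    (q : ℝ) (hq : 1 - p θtil < q) :
    Tendsto (fun t : ℕ =>
        ∑ h : Fin t → X, (if q ≤ post p φ Qhat h then ∏ s, φ θhat (h s) else 0))
      atTop (nhds 0) := by
  set δ := p θtil - (1 - q) with hδdef
  have hδ : 0 < δ := by linarith
  set D : Finset Θ := Finset.univ.filter fun θ => φ θ ≠ φ θhat with hD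
  have hlim : Tendsto (fun t : ℕ =>
      √(1 / δ) * ∑ θ ∈ D, (∑ x, √(φ θ x * φ θhat x)) ^ t) atTop (nhds 0) := by
    rw [show (0 : ℝ) = √(1 / δ) * ∑ θ ∈ D, (0 : ℝ) by simp]
    refine (tendsto_finsetSum D fun θ hθ => ?_).const_mul _
    exact tendsto_pow_atTop_nhds_zero_of_lt_one
      (Finset.sum_nonneg fun x _ => Real.sqrt_nonneg _)
      (sum_sqrt_mul_lt_one _ _ (hφ0 θ) (hφ0 θhat) (hφ1 θ) (hφ1 θhat) (Finset.mem_filter.mp hθ).2)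
  refine squeeze_zero (fun t => Finset.sum_nonneg fun h _ => ?_) (fun t => ?_) hlim
  · split_ifs
    · exact Finset.prod_nonneg fun s _ => (hφ0 _ _).le
    · exact le_rfl
  · have hswap : ∑ θ ∈ D, (∑ x, √(φ θ x * φ θhat x)) ^ t =
        ∑ h : Fin t → X, ∑ θ ∈ D, ∏ s, √(φ θ (h s) * φ θhat (h s)) := by
      rw [Finset.sum_comm]
      exact Finset.sum_congr rfl fun θ _ => Fintype.sum_pow _ _
    rw [hswap, Finset.mul_sum]
    refine Finset.sum_le_sum fun h _ => ?_
    have hb : ∀ θ, 0 ≤ ∏ s, √(φ θ (h s) * φ θhat (h s)) :=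
      fun θ => Finset.prod_nonneg fun s _ => Real.sqrt_nonneg _
    have hB := Finset.sum_nonneg fun θ (_ : θ ∈ D) => hb θ
    split_ifs with hpost
    · have hL : 0 < ∏ s, φ θhat (h s) := Finset.prod_pos fun s _ => hφ0 _ _
      have hdom := likelihood_le_of_le_post p hp0 hp1 φ hφ0 Qhat θhat θtil htil heq q hq h hpost
      have hbsq : ∀ θ, (∏ s, √(φ θ (h s) * φ θhat (h s))) ^ 2 =
          (∏ s, φ θ (h s)) * ∏ s, φ θhat (h s) := fun θ => by
        rw [← Finset.prod_pow, ← Finset.prod_mul_distrib]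
        exact Finset.prod_congr rfl fun s _ =>
          Real.sq_sqrt (mul_pos (hφ0 _ _) (hφ0 _ _)).le
      have hsq : δ * (∏ s, φ θhat (h s)) ^ 2 ≤
          (∑ θ ∈ D, ∏ s, √(φ θ (h s) * φ θhat (h s))) ^ 2 :=
        calc δ * (∏ s, φ θhat (h s)) ^ 2
            = (δ * ∏ s, φ θhat (h s)) * ∏ s, φ θhat (h s) := by ring
          _ ≤ (∑ θ ∈ D, ∏ s, φ θ (h s)) * ∏ s, φ θhat (h s) :=
              mul_le_mul_of_nonneg_right hdom hL.le
          _ = ∑ θ ∈ D, (∏ s, √(φ θ (h s) * φ θhat (h s))) ^ 2 := by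
              rw [Finset.sum_mul]
              exact Finset.sum_congr rfl fun θ _ => (hbsq θ).symm
          _ ≤ _ := Finset.sum_sq_le_sq_sum_of_nonneg fun θ _ => hb θ
      refine le_of_abs_le (abs_le_of_sq_le_sq ?_ (by positivity))
      rw [mul_pow, Real.sq_sqrt (by positivity), one_div, inv_mul_eq_div, le_div_iff₀ hδ]
      linarith
    · exact mul_nonneg (Real.sqrt_nonneg _) hB
end
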